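/- Let d be a positive integer, let S ⊆ {1,…,d}, and for each k ∈ S let v_k ∈ ℝ^d be a vector whose l-th coordinate vanishes unless l < k and l ∉ S. Let f : ℝ^d → ℂ be measurable with |f(x + e_k)| = |f(x + v_k)| for every k ∈ S and every x ∈ ℝ^d, where e_k is the k-th standard basis vector. Let I = { x ∈ ℝ^d : x_k ∈ [0,1] for all k ∈ S }, let p, r ∈ (0,∞] satisfy r ≤ min(1,p), and let a : ℤ^d → ℂ. Define g(x) = Σ_{j∈ℤ^d} |a(j)|·|f(x − j)|. Then ‖g‖_{L^p(I)} ≤ ‖a‖_{ℓ^r(ℤ^d)}·‖f‖_{L^p(I)}. -/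

import Mathlib

open MeasureTheory ENNReal

/-- The `L^p` quasi-norm of an `ℝ≥0∞`-valued function:
`(∫ g^p)^(1/p)` for `p < ∞`, and the essential supremum for `p = ∞`. -/
noncomputable def eLpNormENN {α : Type*} [MeasurableSpace α] (g : α → ℝ≥0∞)
    (p : ℝ≥0∞) (μ : Measure α) : ℝ≥0∞ :=
  if p = ⊤ then essSup g μ else (∫⁻ x, g x ^ p.toReal ∂μ) ^ (1 / p.toReal)

/-!
Modulo the periods `v k - e_k` of `|f|`, every lattice vector `j` is congruent to a vector `w j`
that vanishes on the coordinates in `S`. Translation by `w j` preserves the region, so every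
`|f(· - j)|` has the same `L^p` quasi-norm over it as `f`. The estimate is then the
`r`-subadditivity `‖∑ F_j‖_p ^ r ≤ ∑ ‖F_j‖_p ^ r`, valid for `r ≤ min 1 p`: take `r`-th powers
termwise and apply Minkowski's inequality in `L^(p/r)`.
-/

section Subadditivity

variable {α ι : Type*} [MeasurableSpace α] {μ : Measure α} {p r : ℝ≥0∞}

theorem eLpNormENN_eq_eLpNorm (hp : p ≠ 0) (g : α → ℝ≥0∞) :
    eLpNormENN g p μ = eLpNorm g p μ := by
  by_cases hp_top : p = ∞
  · simp [eLpNormENN, hp_top, eLpNormEssSup]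
  · simp [eLpNormENN, hp_top, eLpNorm_eq_lintegral_rpow_enorm_toReal hp hp_top]

theorem rpow_tsum_le_tsum_rpow (b : ι → ℝ≥0∞) {s : ℝ} (hs : 0 < s) (hs_one : s ≤ 1) :
    (∑' i, b i) ^ s ≤ ∑' i, b i ^ s := by
  rw [← ENNReal.le_rpow_inv_iff hs, ENNReal.tsum_eq_iSup_sum]
  refine iSup_le fun t ↦ (ENNReal.le_rpow_inv_iff hs).2 ?_
  calc (∑ i ∈ t, b i) ^ s
      ≤ ∑ i ∈ t, b i ^ s :=
        Finset.le_sum_of_subadditive (· ^ s) (ENNReal.zero_rpow_of_pos hs).le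
          (fun x y ↦ ENNReal.rpow_add_le_add_rpow x y hs.le hs_one) t b
    _ ≤ ∑' i, b i ^ s := ENNReal.sum_le_tsum t

variable [Countable ι]

theorem eLpNormEssSup_tsum_le (F : ι → α → ℝ≥0∞) :
    eLpNormEssSup (fun x ↦ ∑' i, F i x) μ ≤ ∑' i, eLpNormEssSup (F i) μ := by
  have h_le : ∀ᵐ x ∂μ, ∀ i, F i x ≤ eLpNormEssSup (F i) μ :=
    ae_all_iff.2 fun i ↦ enorm_ae_le_eLpNormEssSup (F i) μ
  refine essSup_le_of_ae_le _ ?_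
  filter_upwards [h_le] with x hx using ENNReal.tsum_le_tsum hx

theorem lintegral_tsum_rpow_eq_iSup {F : ι → α → ℝ≥0∞} (hF : ∀ i, AEMeasurable (F i) μ)
    {s : ℝ} (hs : 0 < s) :
    ∫⁻ x, (∑' i, F i x) ^ s ∂μ = ⨆ t : Finset ι, ∫⁻ x, (∑ i ∈ t, F i x) ^ s ∂μ := by
  have h_rpow (x : α) : (∑' i, F i x) ^ s = ⨆ t : Finset ι, (∑ i ∈ t, F i x) ^ s := by
    rw [ENNReal.tsum_eq_iSup_sum]
    exact (ENNReal.orderIsoRpow s hs).map_iSup _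
  simp_rw [h_rpow]
  refine lintegral_iSup_directed
    (fun t ↦ (Finset.aemeasurable_fun_sum t fun i _ ↦ hF i).pow_const s) ?_
  refine directed_of_isDirected_le fun t u htu x ↦ ?_
  exact ENNReal.rpow_le_rpow (Finset.sum_le_sum_of_subset htu) hs.le

theorem eLpNorm_tsum_le {F : ι → α → ℝ≥0∞} (hF : ∀ i, AEMeasurable (F i) μ) (hp : 1 ≤ p) :
    eLpNorm (fun x ↦ ∑' i, F i x) p μ ≤ ∑' i, eLpNorm (F i) p μ := by
  obtain rfl | hp_top := eq_or_ne p ∞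
  · simpa only [eLpNorm_exponent_top] using eLpNormEssSup_tsum_le F
  have hp_zero : p ≠ 0 := (zero_lt_one.trans_le hp).ne'
  have hp_pos : 0 < p.toReal := ENNReal.toReal_pos hp_zero hp_top
  have h_finset (t : Finset ι) :
      ∫⁻ x, (∑ i ∈ t, F i x) ^ p.toReal ∂μ ≤ (∑' i, eLpNorm (F i) p μ) ^ p.toReal := by
    rw [← ENNReal.rpow_inv_le_iff hp_pos, ← one_div]
    calc (∫⁻ x, (∑ i ∈ t, F i x) ^ p.toReal ∂μ) ^ (1 / p.toReal)
        = eLpNorm (∑ i ∈ t, F i) p μ := by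
          simp [eLpNorm_eq_lintegral_rpow_enorm_toReal hp_zero hp_top]
      _ ≤ ∑ i ∈ t, eLpNorm (F i) p μ :=
          eLpNorm_sum_le (fun i _ ↦ (hF i).aestronglyMeasurable) hp
      _ ≤ ∑' i, eLpNorm (F i) p μ := ENNReal.sum_le_tsum t
  rw [eLpNorm_eq_lintegral_rpow_enorm_toReal hp_zero hp_top, one_div,
    ENNReal.rpow_inv_le_iff hp_pos]
  simpa only [enorm_eq_self, lintegral_tsum_rpow_eq_iSup hF hp_pos] using iSup_le h_finset

theorem eLpNorm_rpow_toReal_eq (hr : r ≠ 0) (hr_top : r ≠ ∞) (g : α → ℝ≥0∞) :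
    eLpNorm g p μ ^ r.toReal = eLpNorm (fun x ↦ g x ^ r.toReal) (p / r) μ := by
  have h := eLpNorm_enorm_rpow (p := p / r) (μ := μ) g (ENNReal.toReal_pos hr hr_top)
  rw [ENNReal.ofReal_toReal hr_top, ENNReal.div_mul_cancel hr hr_top] at h
  exact h.symm

theorem eLpNorm_tsum_rpow_le_tsum {F : ι → α → ℝ≥0∞} (hF : ∀ i, AEMeasurable (F i) μ)
    (hr : r ≠ 0) (hr_le : r ≤ min 1 p) :
    eLpNorm (fun x ↦ ∑' i, F i x) p μ ^ r.toReal ≤ ∑' i, eLpNorm (F i) p μ ^ r.toReal := by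
  obtain ⟨hr_one, hrp⟩ := le_min_iff.1 hr_le
  have hr_top : r ≠ ∞ := ne_top_of_le_ne_top one_ne_top hr_one
  have hs : 0 < r.toReal := ENNReal.toReal_pos hr hr_top
  have hs_one : r.toReal ≤ 1 := ENNReal.toReal_le_of_le_ofReal zero_le_one (by simpa)
  have h_div : 1 ≤ p / r := (ENNReal.le_div_iff_mul_le (.inl hr) (.inl hr_top)).2 (by simpa)
  simp only [eLpNorm_rpow_toReal_eq hr hr_top]
  calc eLpNorm (fun x ↦ (∑' i, F i x) ^ r.toReal) (p / r) μ
      ≤ eLpNorm (fun x ↦ ∑' i, F i x ^ r.toReal) (p / r) μ :=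
        eLpNorm_mono_enorm fun x ↦ rpow_tsum_le_tsum_rpow _ hs hs_one
    _ ≤ ∑' i, eLpNorm (fun x ↦ F i x ^ r.toReal) (p / r) μ :=
        eLpNorm_tsum_le (fun i ↦ (hF i).pow_const _) h_div

theorem eLpNorm_tsum_enorm_mul_le [MeasurableSpace ι] [MeasurableSingletonClass ι]
    {E : Type*} [SeminormedAddGroup E] (a : ι → E) {F : ι → α → ℝ≥0∞} {C : ℝ≥0∞}
    (hF : ∀ i, AEMeasurable (F i) μ) (hFC : ∀ i, eLpNorm (F i) p μ ≤ C)
    (hr : r ≠ 0) (hr_le : r ≤ min 1 p) :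
    eLpNorm (fun x ↦ ∑' i, ‖a i‖ₑ * F i x) p μ ≤ eLpNorm a r Measure.count * C := by
  have hr_top : r ≠ ∞ := ne_top_of_le_ne_top one_ne_top (le_min_iff.1 hr_le).1
  have hs : 0 < r.toReal := ENNReal.toReal_pos hr hr_top
  have h_term (i : ι) : eLpNorm (fun x ↦ ‖a i‖ₑ * F i x) p μ ≤ ‖a i‖ₑ * C := by
    refine le_trans ?_ (mul_le_mul_right (hFC i) _)
    exact eLpNorm_le_nnreal_smul_eLpNorm_of_ae_le_mul' (c := ‖a i‖₊) (.of_forall fun _ ↦ le_rfl) p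
  have h_count : eLpNorm a r Measure.count ^ r.toReal = ∑' i, ‖a i‖ₑ ^ r.toReal := by
    rw [eLpNorm_eq_lintegral_rpow_enorm_toReal hr hr_top, lintegral_count, one_div,
      ENNReal.rpow_inv_rpow hs.ne']
  rw [← ENNReal.rpow_le_rpow_iff hs]
  calc eLpNorm (fun x ↦ ∑' i, ‖a i‖ₑ * F i x) p μ ^ r.toReal
      ≤ ∑' i, eLpNorm (fun x ↦ ‖a i‖ₑ * F i x) p μ ^ r.toReal :=
        eLpNorm_tsum_rpow_le_tsum (fun i ↦ (hF i).const_mul _) hr hr_le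
    _ ≤ ∑' i, (‖a i‖ₑ * C) ^ r.toReal :=
        ENNReal.tsum_le_tsum fun i ↦ ENNReal.rpow_le_rpow (h_term i) hs.le
    _ = (eLpNorm a r Measure.count * C) ^ r.toReal := by
        simp only [ENNReal.mul_rpow_of_nonneg _ _ hs.le, ENNReal.tsum_mul_right, h_count]

end Subadditivity

section EchoPeriodicity

variable {ι : Type*}

theorem exists_translate_eq_of_echo {R X : Type*} [Ring R] [DecidableEq ι] {S : Finset ι}
    {v : ι → ι → R} (hv : ∀ k ∈ S, ∀ l ∈ S, v k l = 0) {F : (ι → R) → X}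
    (hF : ∀ k ∈ S, ∀ x, F (x + Pi.single k 1) = F (x + v k)) (j : ι → ℤ) :
    ∃ w : ι → R, (∀ l ∈ S, w l = 0) ∧ ∀ x, F (x - fun i ↦ (j i : R)) = F (x - w) := by
  have h_period (k : ι) (hk : k ∈ S) : Function.Periodic F (v k - Pi.single k 1) := fun x ↦ by
    rw [add_sub_left_comm, add_comm, ← hF k hk, sub_add_cancel]
  have h_sum : Function.Periodic F (∑ k ∈ S, j k • (v k - Pi.single k 1)) :=
    Finset.sum_induction _ (Function.Periodic F) (fun _ _ ↦ .add_period) (fun x ↦ by simp)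
      fun k hk ↦ (h_period k hk).zsmul (j k)
  refine ⟨(fun i ↦ (j i : R)) + ∑ k ∈ S, j k • (v k - Pi.single k 1), fun l hl ↦ ?_, fun x ↦ ?_⟩
  · have h_coord (k : ι) (hk : k ∈ S) :
        (j k • (v k - Pi.single k 1) : ι → R) l = -if l = k then (j k : R) else 0 := by
      simp [hv k hk l hl, Pi.single_apply]
    rw [Pi.add_apply, Finset.sum_apply, Finset.sum_congr rfl h_coord]
    simp [hl]
  · rw [← sub_sub, h_sum.sub_eq]

theorem measurePreserving_sub_right_restrict_pi {G : ι → Type*} [∀ i, AddGroup (G i)]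
    [∀ i, MeasurableSpace (G i)] [∀ i, MeasurableAdd (G i)] (μ : Measure (∀ i, G i))
    [μ.IsAddRightInvariant] {S : Set ι} {w : ∀ i, G i} (hw : ∀ l ∈ S, w l = 0)
    (t : ∀ i, Set (G i)) :
    MeasurePreserving (· - w) (μ.restrict (S.pi t)) (μ.restrict (S.pi t)) := by
  have h_preimage : (· - w) ⁻¹' S.pi t = S.pi t := by
    ext x
    refine forall₂_congr fun l hl ↦ ?_
    simp only [Pi.sub_apply, hw l hl, sub_zero]
  have h := (measurePreserving_sub_right μ w).restrict_preimage_emb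
    (MeasurableEquiv.subRight w).measurableEmbedding (S.pi t)
  rwa [h_preimage] at h

theorem stmt_10_general [Fintype ι] [DecidableEq ι] {E E' : Type*} [SeminormedAddGroup E]
    [SeminormedAddGroup E'] {S : Finset ι} {v : ι → ι → ℝ} (hv : ∀ k ∈ S, ∀ l ∈ S, v k l = 0)
    {t : ι → Set ℝ} {f : (ι → ℝ) → E}
    (hf : AEStronglyMeasurable f (volume.restrict (Set.pi S t)))
    (hecho : ∀ k ∈ S, ∀ x, ‖f (x + Pi.single k 1)‖ = ‖f (x + v k)‖)
    {p r : ℝ≥0∞} (hr : r ≠ 0) (hr_le : r ≤ min 1 p) (a : (ι → ℤ) → E') :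
    eLpNorm (fun x ↦ ∑' j : ι → ℤ, ‖a j‖ₑ * ‖f (x - fun i ↦ (j i : ℝ))‖ₑ) p
        (volume.restrict (Set.pi S t))
      ≤ eLpNorm a r Measure.count * eLpNorm f p (volume.restrict (Set.pi S t)) := by
  have hecho_enorm (k : ι) (hk : k ∈ S) (x : ι → ℝ) :
      ‖f (x + Pi.single k 1)‖ₑ = ‖f (x + v k)‖ₑ := by
    rw [← ofReal_norm, hecho k hk x, ofReal_norm]
  choose w hw h_translate using exists_translate_eq_of_echo (F := fun x ↦ ‖f x‖ₑ) hv hecho_enorm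
  have h_preserving (j : ι → ℤ) := measurePreserving_sub_right_restrict_pi volume (hw j) t
  simp only [h_translate]
  refine eLpNorm_tsum_enorm_mul_le a (fun j ↦ ?_) (fun j ↦ ?_) hr hr_le
  · exact hf.enorm.comp_quasiMeasurePreserving (h_preserving j).quasiMeasurePreserving
  · exact ((eLpNorm_enorm _).trans (eLpNorm_comp_measurePreserving hf (h_preserving j))).le

end EchoPeriodicity

/-- Semi-discrete Young-type inequality for echo-periodic functions: let
`S ⊆ {1,…,d}` and for each `k ∈ S` let `v k` be supported on coordinates
`l` with `l < k` and `l ∉ S`, with `|f(x + e_k)| = |f(x + v k)|` for all `x`.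
Let `I = {x : x_k ∈ [0,1] for all k ∈ S}`.  If `r ≤ min(1,p)` and
`g(x) = Σ_{j∈ℤ^d} |a(j)|·|f(x−j)|`, then
`‖g‖_{L^p(I)} ≤ ‖a‖_{ℓ^r(ℤ^d)}·‖f‖_{L^p(I)}`. -/
theorem stmt_10 (d : ℕ) (hd : 0 < d) (S : Finset (Fin d))
    (v : Fin d → Fin d → ℝ)
    (hv : ∀ k ∈ S, ∀ l : Fin d, ¬(l < k ∧ l ∉ S) → v k l = 0)
    (f : (Fin d → ℝ) → ℂ) (hf : Measurable f)
    (hecho : ∀ k ∈ S, ∀ x : Fin d → ℝ,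
      ‖f (x + Pi.single k (1 : ℝ))‖ = ‖f (x + v k)‖)
    (I : Set (Fin d → ℝ))
    (hI : I = {x : Fin d → ℝ | ∀ k ∈ S, x k ∈ Set.Icc (0 : ℝ) 1})
    (p r : ℝ≥0∞) (hp : 0 < p) (hr : 0 < r) (hrp : r ≤ min 1 p)
    (a : (Fin d → ℤ) → ℂ)
    (g : (Fin d → ℝ) → ℝ≥0∞)
    (hg : ∀ x, g x = ∑' j : Fin d → ℤ,
      (‖a j‖₊ : ℝ≥0∞) * (‖f (x - fun i => (j i : ℝ))‖₊ : ℝ≥0∞)) :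
    eLpNormENN g p (volume.restrict I)
      ≤ eLpNorm a r (Measure.count : Measure (Fin d → ℤ))
          * eLpNorm f p (volume.restrict I) := by
  rw [eLpNormENN_eq_eLpNorm hp.ne', funext hg, hI]
  exact stmt_10_general (fun k hk l hl ↦ hv k hk l fun h ↦ h.2 hl) hf.aestronglyMeasurable
    hecho hr.ne' hrp a
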